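/- Let T ≥ 1 be an integer and define, for each q^T ∈ {0,1}^T, the state sequence a_0 = b_0 = T + √T and for t = 1,…,T−1: if q_t = 0 then a_t = f_{T−t}(b_{t−1}) and b_t = b_{t−1}, and if q_t = 1 then b_t = f_{T−t}(a_{t−1}) and a_t = a_{t−1}. Define the odds r_1 = 1/2 and r_{t+1}(q^t) = 1/(b_t − f_{T−t−1}(a_t)) for t = 1,…,T−1. Then this is a valid skeleton strategy (all r_t(q^{t-1}) ∈ (0,1)), and for every decisive bet sequence q^T ∈ {0,1}^T the individual game loss equals exactly T + √T: max{ Σ_{t=1}^T q_t / r_t(q^{t−1}) , Σ_{t=1}^T (1−q_t)/(1−r_t(q^{t−1})) } = T + √T. -/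

import Mathlib

/-!
Call `T + √T` the budget. With `d = T - t` rounds left, the state `(a_t, b_t)` lies on the branch
`a, b > d` of the hyperbola `(a - d) * (b - d) = d`, on which `f_d` interchanges the coordinates.
On this branch the odds satisfy both `1 / r = b - f_{d-1}(a)`, which is their definition, and
`1 / (1 - r) = a - f_{d-1}(b)`, which is the content of `pay_of_onCurve`. So the coordinate changed
by a bet drops by exactly the loss that the bet incurs, and `a_t` and `b_t` are what remains of the
budget on the side of the zeros and of the ones (`state_inv`). The last bet brings one of these
remainders to `f_0 = 0`, while the other one stays positive: the larger loss is the whole budget.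
-/

/-- `f_d(x) = d·(x−(d−1))/(x−d)` for `d ≥ 1`, and `f_0(x) = 0`. -/
noncomputable def fd (d : ℕ) (x : ℝ) : ℝ :=
  if d = 0 then 0 else d * (x - ((d : ℝ) - 1)) / (x - d)

/-- The state `(a_t, b_t)` of Algorithm 1: `a_0 = b_0 = T + √T`, and for
`t = 1,…,T−1`, if `q_t = 0` then `a_t = f_{T−t}(b_{t−1})`, `b_t = b_{t−1}`, and
if `q_t = 1` then `b_t = f_{T−t}(a_{t−1})`, `a_t = a_{t−1}`.  (Here `q` is
0-indexed: the bet `q_t` of round `t` is `q (t-1)`.) -/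
noncomputable def algState (T : ℕ) (q : ℕ → Bool) : ℕ → ℝ × ℝ
  | 0 => (T + Real.sqrt T, T + Real.sqrt T)
  | t + 1 =>
    if t + 1 < T then
      if q t then ((algState T q t).1, fd (T - (t + 1)) (algState T q t).1)
      else (fd (T - (t + 1)) (algState T q t).2, (algState T q t).2)
    else algState T q t

/-- The odds of Algorithm 1: `r_1 = 1/2` and
`r_{t+1} = 1/(b_t − f_{T−t−1}(a_t))` for `t = 1,…,T−1`.  (0-indexed: `algOdds T q t`
is the odd `r_{t+1}` offered in round `t+1`.) -/
noncomputable def algOdds (T : ℕ) (q : ℕ → Bool) (t : ℕ) : ℝ :=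
  if t = 0 then 1 / 2
  else 1 / ((algState T q t).2 - fd (T - t - 1) (algState T q t).1)

/-- The pair `p` lies on the branch `a, b > d` of the hyperbola `(a - d) * (b - d) = d`. -/
def OnCurve (d : ℕ) (p : ℝ × ℝ) : Prop :=
  (d : ℝ) < p.1 ∧ (d : ℝ) < p.2 ∧ (p.1 - d) * (p.2 - d) = d

/-- The case distinction in `fd` is redundant, since the quotient already vanishes at `d = 0`. -/
lemma fd_eq (d : ℕ) (x : ℝ) : fd d x = d * (x - ((d : ℝ) - 1)) / (x - d) := by
  unfold fd
  split_ifs with h <;> simp [h]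

/-- For `x > d`, the point `(x, fd d x)` satisfies the equation of the hyperbola in `OnCurve`. -/
lemma fd_sub {d : ℕ} {x : ℝ} (hx : (d : ℝ) < x) : fd d x - d = d / (x - d) := by
  have : x - d ≠ 0 := (sub_pos.2 hx).ne'
  rw [fd_eq]
  field_simp
  ring

lemma OnCurve.swap {d : ℕ} {p : ℝ × ℝ} (h : OnCurve d p) : OnCurve d p.swap :=
  ⟨h.2.1, h.1, by rw [mul_comm]; exact h.2.2⟩

lemma onCurve_fd {d : ℕ} (hd : 0 < d) {x : ℝ} (hx : (d : ℝ) < x) : OnCurve d (x, fd d x) := by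
  have h0 : 0 < x - d := sub_pos.2 hx
  have hd' : (0 : ℝ) < d := Nat.cast_pos.2 hd
  refine ⟨hx, sub_pos.1 ?_, ?_⟩
  · simp only [fd_sub hx]; positivity
  · simp only [fd_sub hx]; field_simp

/-- The drop of the second coordinate when it is replaced by `fd d p.1`, in closed form. -/
lemma sub_fd_of_onCurve {d : ℕ} {p : ℝ × ℝ} (h : OnCurve (d + 1) p) :
    p.2 - fd d p.1 = (p.1 + p.2 - 2 * d) / (p.1 - d) := by
  obtain ⟨ha, hb, hab⟩ := h
  push_cast at ha hb hab
  have h0 : p.1 - d ≠ 0 := by linarith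
  rw [sub_eq_iff_eq_add.1 (fd_sub (d := d) (x := p.1) (by linarith))]
  field_simp
  linear_combination hab

/-- On the curve, the odds whose payoff on a one is `b - f_d(a)` are valid and have payoff
`a - f_d(b)` on a zero. -/
lemma pay_of_onCurve {d : ℕ} {p : ℝ × ℝ} (h : OnCurve (d + 1) p) {r : ℝ}
    (hr : r = 1 / (p.2 - fd d p.1)) :
    r ∈ Set.Ioo (0 : ℝ) 1 ∧ 1 / r = p.2 - fd d p.1 ∧ 1 / (1 - r) = p.1 - fd d p.2 := by
  have e := sub_fd_of_onCurve h
  have e' := sub_fd_of_onCurve h.swap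
  simp only [Prod.fst_swap, Prod.snd_swap] at e'
  obtain ⟨ha, hb, -⟩ := h
  push_cast at ha hb
  have ha' : 0 < p.1 - d := by linarith
  have hb' : 0 < p.2 - d := by linarith
  have hs : 0 < p.1 + p.2 - 2 * d := by linarith
  have hr' : r = (p.1 - d) / (p.1 + p.2 - 2 * d) := by rw [hr, e, one_div_div]
  have hr1 : 1 - r = (p.2 - d) / (p.1 + p.2 - 2 * d) := by
    rw [hr', eq_div_iff hs.ne', sub_mul, div_mul_cancel₀ _ hs.ne']; ring
  refine ⟨⟨by rw [hr']; positivity, sub_pos.1 (by rw [hr1]; positivity)⟩, ?_, ?_⟩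
  · rw [hr, one_div_one_div]
  · rw [hr1, e', one_div_div, add_comm p.2]

lemma state_onCurve {T : ℕ} (hT : 1 ≤ T) (q : ℕ → Bool) {t : ℕ} (ht : t < T) :
    OnCurve (T - t) (algState T q t) := by
  induction t with
  | zero =>
    have : (0 : ℝ) < √T := Real.sqrt_pos.2 (Nat.cast_pos.2 hT)
    refine ⟨?_, ?_, ?_⟩ <;> simp [algState, this]
  | succ t ih =>
    obtain ⟨ha, hb, -⟩ := ih (by omega)
    have hlt : ((T - (t + 1) : ℕ) : ℝ) < (T - t : ℕ) := Nat.cast_lt.2 (by omega)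
    rw [algState, if_pos ht]
    split_ifs
    · exact onCurve_fd (by omega) (hlt.trans ha)
    · exact (onCurve_fd (by omega) (hlt.trans hb)).swap

lemma odds_eq {T : ℕ} (hT : 1 ≤ T) (q : ℕ → Bool) {t : ℕ} (ht : t < T) :
    algOdds T q t = 1 / ((algState T q t).2 - fd (T - t - 1) (algState T q t).1) := by
  unfold algOdds
  split_ifs with h0
  -- In the first round the two coordinates coincide, and the general formula gives `1 / 2`.
  · subst h0
    have h := state_onCurve hT q ht
    rw [show T - 0 = T - 0 - 1 + 1 by omega] at h
    have hp : (algState T q 0).1 = (algState T q 0).2 := rfl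
    rw [sub_fd_of_onCurve h, one_div_div]
    have h1 := h.1
    push_cast at h1
    rw [← hp, eq_div_iff (by linarith)]
    ring
  · rfl

lemma odds_all {T : ℕ} (hT : 1 ≤ T) (q : ℕ → Bool) {t : ℕ} (ht : t < T) :
    algOdds T q t ∈ Set.Ioo (0 : ℝ) 1 ∧
      1 / algOdds T q t = (algState T q t).2 - fd (T - t - 1) (algState T q t).1 ∧
      1 / (1 - algOdds T q t) = (algState T q t).1 - fd (T - t - 1) (algState T q t).2 := by
  have h := state_onCurve hT q ht
  rw [show T - t = T - t - 1 + 1 by omega] at h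
  exact pay_of_onCurve h (odds_eq hT q ht)

/-- The state stays on the curve, and its coordinates are the remainders of the budget `T + √T`
after the losses on ones (second coordinate) and on zeros (first coordinate). -/
lemma state_inv {T : ℕ} (hT : 1 ≤ T) (q : ℕ → Bool) (t : ℕ) (ht : t < T) :
    OnCurve (T - t) (algState T q t) ∧
    ∑ s ∈ Finset.range t, (if q s then (1:ℝ) else 0) / algOdds T q s =
      T + √T - (algState T q t).2 ∧
    ∑ s ∈ Finset.range t, (1 - if q s then (1:ℝ) else 0) / (1 - algOdds T q s) =
      T + √T - (algState T q t).1 := by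
  refine ⟨state_onCurve hT q ht, ?_⟩
  induction t with
  | zero => simp [algState]
  | succ t ih =>
    obtain ⟨h1, h0⟩ := ih (by omega)
    obtain ⟨-, e1, e0⟩ := odds_all hT q (t := t) (by omega)
    rw [Finset.sum_range_succ, Finset.sum_range_succ, h1, h0, algState, if_pos ht, ← Nat.sub_sub]
    cases hq : q t
    · simp only [Bool.false_eq_true, if_false, zero_div, sub_zero, e0]
      constructor <;> ring
    · simp only [if_true, sub_self, zero_div, e1]
      constructor <;> ring

/-- Algorithm 1 defines a valid skeleton strategy, and against every decisive bet
sequence its individual game loss is exactly `T + √T`. -/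
theorem algorithm_one_optimal (T : ℕ) (hT : 1 ≤ T) (q : ℕ → Bool) :
    (∀ t < T, algOdds T q t ∈ Set.Ioo (0:ℝ) 1) ∧
    max (∑ t : Fin T, (if q t.1 then (1:ℝ) else 0) / algOdds T q t.1)
        (∑ t : Fin T, (1 - if q t.1 then (1:ℝ) else 0) / (1 - algOdds T q t.1)) =
      T + Real.sqrt T := by
  obtain ⟨n, rfl⟩ : ∃ n, T = n + 1 := ⟨T - 1, by omega⟩
  refine ⟨fun t ht => (odds_all hT q ht).1, ?_⟩
  obtain ⟨⟨ha, hb, hab⟩, hL1, hL0⟩ := state_inv hT q n (by omega)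
  obtain ⟨-, h1, h0⟩ := odds_all hT q (t := n) (by omega)
  have hd : n + 1 - n - 1 = 0 := by omega
  simp only [hd, fd, if_true, sub_zero] at h1 h0
  simp only [Nat.add_sub_cancel_left, Nat.cast_one] at ha hb
  rw [Fin.sum_univ_eq_sum_range (fun t => (if q t then (1:ℝ) else 0) / algOdds (n + 1) q t),
    Fin.sum_univ_eq_sum_range
      (fun t => (1 - if q t then (1:ℝ) else 0) / (1 - algOdds (n + 1) q t)),
    Finset.sum_range_succ, Finset.sum_range_succ, hL1, hL0]
  -- The last payoff uses up one of the two remaining budgets exactly; the other is positive.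
  cases hq : q n
  · simp only [Bool.false_eq_true, if_false, zero_div, sub_zero, h0]
    rw [max_eq_right] <;> linarith
  · simp only [if_true, sub_self, zero_div, h1]
    rw [max_eq_left] <;> linarith
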